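/- The 1-form α = (2r² − 1)dz + r²(r² − 1)dθ + Σᵢ ρᵢ² dφᵢ on ℝ^{2n+1} (with coordinates z, polar (r,θ), and polar (ρᵢ, φᵢ) for i = 1,…,n−1) is a contact form, i.e., α ∧ (dα)^n is nowhere vanishing. -/

import Mathlib

/-- The `k`-th coordinate of a point of `ℝ^{2n+1}` (as a total function of
`k : ℕ`, defaulting to `0` out of range).  Coordinate `0` is `z`, coordinates
`1, 2` are the Cartesian coordinates `x, y` of the `(r,θ)`-plane, and
coordinates `2i+3, 2i+4` are the Cartesian coordinates `xᵢ, yᵢ` of the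
`(ρᵢ, φᵢ)`-plane, `i = 0, …, n-2`. -/
def coordAt (n : ℕ) (p : Fin (2 * n + 1) → ℝ) (k : ℕ) : ℝ :=
  if hk : k < 2 * n + 1 then p ⟨k, hk⟩ else 0

/-- The coefficient of `dx_j` in Cartesian coordinates of the 1-form
`α = (2r² − 1)dz + r²(r² − 1)dθ + Σᵢ ρᵢ² dφᵢ` on `ℝ^{2n+1}`, using
`r² dθ = x dy − y dx` and `ρᵢ² dφᵢ = xᵢ dyᵢ − yᵢ dxᵢ`:
the `dz`-coefficient is `2r² − 1`, the `dx`-coefficient is `−(r² − 1)y`, the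
`dy`-coefficient is `(r² − 1)x`, the `dxᵢ`-coefficient is `−yᵢ` and the
`dyᵢ`-coefficient is `xᵢ`. -/
noncomputable def moriCoeff (n : ℕ) (j : ℕ) (p : Fin (2 * n + 1) → ℝ) : ℝ :=
  let r2 : ℝ := coordAt n p 1 ^ 2 + coordAt n p 2 ^ 2
  if j = 0 then 2 * r2 - 1
  else if j = 1 then -((r2 - 1) * coordAt n p 2)
  else if j = 2 then (r2 - 1) * coordAt n p 1
  else if j % 2 = 1 then -coordAt n p (j + 1)
  else coordAt n p (j - 1)

section SquareZero

variable {A : Type*} [Ring A]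

theorem Commute.add_pow_succ_of_sq_eq_zero {S x : A} (h : Commute S x) (hx : x * x = 0) (m : ℕ) :
    (S + x) ^ (m + 1) = S ^ (m + 1) + (m + 1) • (S ^ m * x) := by
  induction m with
  | zero => simp
  | succ m ih =>
    have hc : S ^ m * x * S = S ^ (m + 1) * x := by
      rw [mul_assoc, ← h.eq, ← mul_assoc, pow_succ]
    have hz : S ^ m * x * x = 0 := by rw [mul_assoc, hx, mul_zero]
    rw [pow_succ, ih, add_mul, mul_add, mul_add, smul_mul_assoc, smul_mul_assoc, hc, hz,
      ← pow_succ]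
    module

/-- For pairwise commuting elements of square zero, `(x₀ + ⋯ + xₖ₋₁) ^ k = k! x₀ ⋯ xₖ₋₁`, and the
next power vanishes. -/
theorem sum_range_pow_of_sq_eq_zero {x : ℕ → A} (hc : ∀ i j, Commute (x i) (x j))
    (hx : ∀ i, x i * x i = 0) (k : ℕ) :
    (∑ i ∈ Finset.range k, x i) ^ k = k.factorial • ((List.range k).map x).prod ∧
      (∑ i ∈ Finset.range k, x i) ^ (k + 1) = 0 := by
  induction k with
  | zero => simp
  | succ k ih =>
    have hS : Commute (∑ i ∈ Finset.range k, x i) (x k) :=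
      Commute.sum_left _ _ _ fun i _ => hc i k
    constructor
    · rw [Finset.sum_range_succ, hS.add_pow_succ_of_sq_eq_zero (hx k), ih.1, ih.2,
        List.range_succ, List.map_append, List.prod_append, Nat.factorial_succ, mul_smul,
        smul_mul_assoc]
      simp
    · rw [Finset.sum_range_succ, hS.add_pow_succ_of_sq_eq_zero (hx k), pow_succ _ (k + 1), ih.2]
      simp

theorem mul_prod_range_eq_zero {x : ℕ → A} (hc : ∀ i j, Commute (x i) (x j)) {a : A} {i k : ℕ}
    (hik : i < k) (ha : a * x i = 0) : a * ((List.range k).map x).prod = 0 := by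
  induction k with
  | zero => omega
  | succ k ih =>
    have hP : Commute ((List.range k).map x).prod (x k) :=
      Commute.list_prod_left _ _ (by simp only [List.mem_map]; rintro _ ⟨j, -, rfl⟩; exact hc j k)
    rw [List.range_succ, List.map_append, List.prod_append, List.map_singleton,
      List.prod_singleton]
    rcases Nat.lt_succ_iff_lt_or_eq.mp hik with h | rfl
    · rw [← mul_assoc, ih h, zero_mul]
    · rw [hP.eq, ← mul_assoc, ha, zero_mul]

end SquareZero

theorem Finset.sum_range_two_mul_add_one {M : Type*} [AddCommMonoid M] (t : ℕ → M) (n : ℕ) :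
    ∑ j ∈ Finset.range (2 * n + 1), t j =
      t 0 + ∑ i ∈ Finset.range n, (t (2 * i + 1) + t (2 * i + 2)) := by
  induction n with
  | zero => simp
  | succ n ih =>
    rw [show 2 * (n + 1) + 1 = 2 * n + 1 + 1 + 1 by ring, Finset.sum_range_succ,
      Finset.sum_range_succ, ih, Finset.sum_range_succ]
    simp only [add_assoc]

section ExteriorAlgebra

variable {R M : Type*} [CommRing R] [AddCommGroup M] [Module R M]

open ExteriorAlgebra (ι)

theorem ExteriorAlgebra.ι_mul_ι_swap (u v : M) : ι R u * ι R v = -(ι R v * ι R u) :=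
  eq_neg_of_add_eq_zero_left (ExteriorAlgebra.ι_add_mul_swap u v)

theorem ExteriorAlgebra.commute_ι_mul_ι_ι (u v w : M) : Commute (ι R u * ι R v) (ι R w) := by
  rw [Commute, SemiconjBy, mul_assoc, ι_mul_ι_swap v w, mul_neg, ← mul_assoc, ι_mul_ι_swap u w]
  simp [mul_assoc]

theorem ExteriorAlgebra.prod_ofFn_ι_single_ne_zero [Nontrivial R] (N : ℕ) :
    (List.ofFn fun i : Fin N => ι R (Pi.single i (1 : R) : Fin N → R)).prod ≠ 0 := by
  intro h
  have h1 : ExteriorAlgebra.ιMulti R N (fun i => (Pi.single i (1 : R) : Fin N → R)) = 0 := by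
    rw [ExteriorAlgebra.ιMulti_apply]; exact h
  have h2 := congrArg (ExteriorAlgebra.liftAlternating (R := R) (M := Fin N → R) (N := R)
    (fun k => if hk : k = N then hk ▸ Matrix.detRowAlternating else 0)) h1
  rw [ExteriorAlgebra.liftAlternating_apply_ιMulti, map_zero] at h2
  simp only [dif_pos] at h2
  have h3 : Matrix.det (1 : Matrix (Fin N) (Fin N) R) = 0 := by
    rw [← h2]
    refine congrArg Matrix.det ?_
    ext i j
    simp [Matrix.one_apply, Pi.single_apply, eq_comm]
  simp at h3

/-- The product of a 1-form and a 2-form in three variables. -/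
theorem ExteriorAlgebra.one_form_mul_two_form (e₀ e₁ e₂ : M) (a b d u v w : R) :
    (a • ι R e₀ + b • ι R e₁ + d • ι R e₂) *
        ((u • ι R e₁ + v • ι R e₂) * ι R e₀ + w • (ι R e₁ * ι R e₂)) =
      (a * w + b * v - d * u) • (ι R e₀ * ι R e₁ * ι R e₂) := by
  have s0 (t) : ι R e₀ * (ι R e₀ * t) = 0 := by rw [← mul_assoc]; simp
  have s1 (t) : ι R e₁ * (ι R e₁ * t) = 0 := by rw [← mul_assoc]; simp
  have h10 := ι_mul_ι_swap (R := R) e₁ e₀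
  have h20 := ι_mul_ι_swap (R := R) e₂ e₀
  have h21 := ι_mul_ι_swap (R := R) e₂ e₁
  have h10' (t) : ι R e₁ * (ι R e₀ * t) = -(ι R e₀ * (ι R e₁ * t)) := by
    rw [← mul_assoc, h10, neg_mul, mul_assoc]
  have h21' (t) : ι R e₂ * (ι R e₁ * t) = -(ι R e₁ * (ι R e₂ * t)) := by
    rw [← mul_assoc, h21, neg_mul, mul_assoc]
  have h20' (t) : ι R e₂ * (ι R e₀ * t) = -(ι R e₀ * (ι R e₂ * t)) := by
    rw [← mul_assoc, h20, neg_mul, mul_assoc]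
  simp only [mul_add, add_mul, smul_mul_assoc, mul_smul_comm, mul_assoc, h10, h20, h21, mul_neg,
    h10', h21', h20', s0, s1, ExteriorAlgebra.ι_sq_zero, smul_zero, smul_neg, neg_zero, mul_zero]
  module

/-- A 2-form in three variables has square zero. -/
theorem ExteriorAlgebra.two_form_mul_self (e₀ e₁ e₂ : M) (u v w : R) :
    ((u • ι R e₁ + v • ι R e₂) * ι R e₀ + w • (ι R e₁ * ι R e₂)) *
        ((u • ι R e₁ + v • ι R e₂) * ι R e₀ + w • (ι R e₁ * ι R e₂)) = 0 := by
  have h0 := one_form_mul_two_form e₀ e₁ e₂ 1 0 0 u v w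
  have h2 := one_form_mul_two_form e₀ e₁ e₂ 0 0 1 u v w
  have hT : ι R e₂ * (ι R e₀ * ι R e₁ * ι R e₂) = 0 := by
    rw [← mul_assoc, ← (commute_ι_mul_ι_ι e₀ e₁ e₂).eq, mul_assoc, ι_sq_zero, mul_zero]
  simp only [one_smul, zero_smul, add_zero, zero_add] at h0 h2
  rw [add_mul, mul_assoc, h0, smul_mul_assoc, mul_assoc (ι R e₁), h2]
  simp only [mul_smul_comm, add_mul, smul_mul_assoc, hT]
  module

end ExteriorAlgebra

/-- `coordAt` as a continuous linear functional. -/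
noncomputable def coordCLM (n k : ℕ) : (Fin (2 * n + 1) → ℝ) →L[ℝ] ℝ :=
  if hk : k < 2 * n + 1 then ContinuousLinearMap.proj ⟨k, hk⟩ else 0

theorem hasFDerivAt_coordAt (n k : ℕ) (p : Fin (2 * n + 1) → ℝ) :
    HasFDerivAt (fun q => coordAt n q k) (coordCLM n k) p := by
  have h : (fun q => coordAt n q k) = coordCLM n k := by
    funext q
    unfold coordAt coordCLM
    split_ifs <;> simp
  rw [h]
  exact (coordCLM n k).hasFDerivAt

/-- The `k`-th standard basis vector of `ℝ^{2n+1}`, zero out of range. -/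
noncomputable def coordVec (n k : ℕ) : Fin (2 * n + 1) → ℝ :=
  if hk : k < 2 * n + 1 then Pi.single ⟨k, hk⟩ 1 else 0

theorem coordVec_coe (n : ℕ) (j : Fin (2 * n + 1)) : coordVec n j = Pi.single j 1 :=
  dif_pos j.2

/-- The coefficient vector of a linear functional on `ℝ^N`. -/
noncomputable def gradVec (N : ℕ) : ((Fin N → ℝ) →L[ℝ] ℝ) →ₗ[ℝ] (Fin N → ℝ) where
  toFun L i := L (Pi.single i 1)
  map_add' _ _ := rfl
  map_smul' _ _ := rfl

theorem sum_smul_ι_eq_ι_gradVec (N : ℕ) (L : (Fin N → ℝ) →L[ℝ] ℝ) :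
    ∑ i, L (Pi.single i 1) • ExteriorAlgebra.ι ℝ (Pi.single i (1 : ℝ) : Fin N → ℝ) =
      ExteriorAlgebra.ι ℝ (gradVec N L) := by
  rw [← Finset.univ_sum_single (gradVec N L), map_sum]
  refine Finset.sum_congr rfl fun i _ => ?_
  rw [← map_smul, ← Pi.single_smul, smul_eq_mul, mul_one]
  rfl

theorem gradVec_coordCLM (n k : ℕ) : gradVec (2 * n + 1) (coordCLM n k) = coordVec n k := by
  ext i
  by_cases hk : k < 2 * n + 1
  · simp [gradVec, coordCLM, coordVec, hk, Pi.single_apply, eq_comm]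
  · simp [gradVec, coordCLM, coordVec, hk]

theorem gradVec_fderiv_zero (n : ℕ) (p : Fin (2 * n + 1) → ℝ) :
    gradVec (2 * n + 1) (fderiv ℝ (moriCoeff n 0) p) =
      (4 * coordAt n p 1) • coordVec n 1 + (4 * coordAt n p 2) • coordVec n 2 := by
  have h := ((((hasFDerivAt_coordAt n 1 p).pow 2).add
    ((hasFDerivAt_coordAt n 2 p).pow 2)).const_mul 2).sub_const 1
  have h' : HasFDerivAt (moriCoeff n 0) _ p := h
  rw [h'.fderiv]
  simp only [map_add, map_smul, gradVec_coordCLM]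
  push_cast
  module

theorem gradVec_fderiv_one (n : ℕ) (p : Fin (2 * n + 1) → ℝ) :
    gradVec (2 * n + 1) (fderiv ℝ (moriCoeff n 1) p) =
      (-(2 * coordAt n p 1 * coordAt n p 2)) • coordVec n 1 +
        (-(coordAt n p 1 ^ 2 + 3 * coordAt n p 2 ^ 2 - 1)) • coordVec n 2 := by
  have h := (((((hasFDerivAt_coordAt n 1 p).pow 2).add
    ((hasFDerivAt_coordAt n 2 p).pow 2)).sub_const 1).mul (hasFDerivAt_coordAt n 2 p)).neg
  have h' : HasFDerivAt (moriCoeff n 1) _ p := h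
  rw [h'.fderiv]
  simp only [map_add, map_smul, map_neg, gradVec_coordCLM, Pi.add_apply]
  push_cast
  module

theorem gradVec_fderiv_two (n : ℕ) (p : Fin (2 * n + 1) → ℝ) :
    gradVec (2 * n + 1) (fderiv ℝ (moriCoeff n 2) p) =
      (3 * coordAt n p 1 ^ 2 + coordAt n p 2 ^ 2 - 1) • coordVec n 1 +
        (2 * coordAt n p 1 * coordAt n p 2) • coordVec n 2 := by
  have h := ((((hasFDerivAt_coordAt n 1 p).pow 2).add
    ((hasFDerivAt_coordAt n 2 p).pow 2)).sub_const 1).mul (hasFDerivAt_coordAt n 1 p)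
  have h' : HasFDerivAt (moriCoeff n 2) _ p := h
  rw [h'.fderiv]
  simp only [map_add, map_smul, gradVec_coordCLM, Pi.add_apply]
  push_cast
  module

theorem gradVec_fderiv_odd (n i : ℕ) (p : Fin (2 * n + 1) → ℝ) :
    gradVec (2 * n + 1) (fderiv ℝ (moriCoeff n (2 * (i + 1) + 1)) p) =
      -coordVec n (2 * (i + 1) + 2) := by
  have h : moriCoeff n (2 * (i + 1) + 1) = fun q => -coordAt n q (2 * (i + 1) + 2) := by
    funext q
    unfold moriCoeff
    simp only [show 2 * (i + 1) + 1 ≠ 0 by omega, show 2 * (i + 1) + 1 ≠ 1 by omega,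
      show 2 * (i + 1) + 1 ≠ 2 by omega, show (2 * (i + 1) + 1) % 2 = 1 by omega, if_true, if_false]
  rw [h, (hasFDerivAt_coordAt n _ p).fun_neg.fderiv, map_neg, gradVec_coordCLM]

theorem gradVec_fderiv_even (n i : ℕ) (p : Fin (2 * n + 1) → ℝ) :
    gradVec (2 * n + 1) (fderiv ℝ (moriCoeff n (2 * (i + 1) + 2)) p) =
      coordVec n (2 * (i + 1) + 1) := by
  have h : moriCoeff n (2 * (i + 1) + 2) = fun q => coordAt n q (2 * (i + 1) + 1) := by
    funext q
    unfold moriCoeff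
    simp only [show 2 * (i + 1) + 2 ≠ 0 by omega, show 2 * (i + 1) + 2 ≠ 1 by omega,
      show 2 * (i + 1) + 2 ≠ 2 by omega, show (2 * (i + 1) + 2) % 2 ≠ 1 by omega, if_false]
    rfl
  rw [h, (hasFDerivAt_coordAt n _ p).fderiv, gradVec_coordCLM]

open ExteriorAlgebra (ι)

/-- The summands of `dα`: the part on `ℝ_z × ℝ²_{(r,θ)}` for `i = 0`, and `2 dxᵢ ∧ dyᵢ` on the
remaining planes. -/
noncomputable def moriBlock (n : ℕ) (p : Fin (2 * n + 1) → ℝ) :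
    ℕ → ExteriorAlgebra ℝ (Fin (2 * n + 1) → ℝ)
  | 0 => ((4 * coordAt n p 1) • ι ℝ (coordVec n 1) + (4 * coordAt n p 2) • ι ℝ (coordVec n 2)) *
        ι ℝ (coordVec n 0) +
      (4 * (coordAt n p 1 ^ 2 + coordAt n p 2 ^ 2) - 2) •
        (ι ℝ (coordVec n 1) * ι ℝ (coordVec n 2))
  | i + 1 => (2 : ℝ) • (ι ℝ (coordVec n (2 * (i + 1) + 1)) * ι ℝ (coordVec n (2 * (i + 1) + 2)))

theorem commute_moriBlock_ι (n : ℕ) (p v : Fin (2 * n + 1) → ℝ) (i : ℕ) :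
    Commute (moriBlock n p i) (ι ℝ v) := by
  have h := fun a b => ExteriorAlgebra.commute_ι_mul_ι_ι (R := ℝ) a b v
  cases i with
  | zero =>
    simp only [moriBlock, add_mul, smul_mul_assoc]
    exact ((((h _ _).smul_left _).add_left ((h _ _).smul_left _)).add_left ((h _ _).smul_left _))
  | succ i => exact (h _ _).smul_left _

theorem commute_moriBlock (n : ℕ) (p : Fin (2 * n + 1) → ℝ) (i j : ℕ) :
    Commute (moriBlock n p i) (moriBlock n p j) := by
  have h := fun v => commute_moriBlock_ι n p v i
  cases j with
  | zero =>
    exact ((((h _).smul_right _).add_right ((h _).smul_right _)).mul_right (h _)).add_right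
      (((h _).mul_right (h _)).smul_right _)
  | succ j => exact ((h _).mul_right (h _)).smul_right _

theorem ι_mul_moriBlock_odd (n : ℕ) (p : Fin (2 * n + 1) → ℝ) (i : ℕ) :
    ι ℝ (coordVec n (2 * (i + 1) + 1)) * moriBlock n p (i + 1) = 0 := by
  simp [moriBlock, ← mul_assoc]

theorem ι_mul_moriBlock_even (n : ℕ) (p : Fin (2 * n + 1) → ℝ) (i : ℕ) :
    ι ℝ (coordVec n (2 * (i + 1) + 2)) * moriBlock n p (i + 1) = 0 := by
  rw [← (commute_moriBlock_ι n p _ _).eq]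
  simp [moriBlock, mul_assoc]

theorem moriBlock_mul_self (n : ℕ) (p : Fin (2 * n + 1) → ℝ) (i : ℕ) :
    moriBlock n p i * moriBlock n p i = 0 := by
  cases i with
  | zero => exact ExteriorAlgebra.two_form_mul_self _ _ _ _ _ _
  | succ i =>
    conv_lhs => enter [1]; rw [moriBlock]
    rw [smul_mul_assoc, mul_assoc, ι_mul_moriBlock_even]
    simp

theorem sum_fderiv_moriCoeff (m : ℕ) (p : Fin (2 * (m + 1) + 1) → ℝ) :
    ∑ i : Fin (2 * (m + 1) + 1), ∑ j : Fin (2 * (m + 1) + 1),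
        fderiv ℝ (moriCoeff (m + 1) (j : ℕ)) p (Pi.single i (1 : ℝ)) •
          (ι ℝ (Pi.single i (1 : ℝ) : Fin (2 * (m + 1) + 1) → ℝ) *
           ι ℝ (Pi.single j (1 : ℝ) : Fin (2 * (m + 1) + 1) → ℝ)) =
      ∑ i ∈ Finset.range (m + 1), moriBlock (m + 1) p i := by
  have hj (j : Fin (2 * (m + 1) + 1)) :
      ∑ i : Fin (2 * (m + 1) + 1), fderiv ℝ (moriCoeff (m + 1) (j : ℕ)) p (Pi.single i (1 : ℝ)) •
          (ι ℝ (Pi.single i (1 : ℝ) : Fin (2 * (m + 1) + 1) → ℝ) *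
           ι ℝ (Pi.single j (1 : ℝ) : Fin (2 * (m + 1) + 1) → ℝ)) =
        ι ℝ (gradVec _ (fderiv ℝ (moriCoeff (m + 1) (j : ℕ)) p)) *
          ι ℝ (coordVec (m + 1) j) := by
    rw [← sum_smul_ι_eq_ι_gradVec, Finset.sum_mul]
    simp only [coordVec_coe, smul_mul_assoc]
  rw [Finset.sum_comm, Finset.sum_congr rfl fun j _ => hj j,
    Fin.sum_univ_eq_sum_range (fun j => ι ℝ (gradVec _ (fderiv ℝ (moriCoeff (m + 1) j) p)) *
      ι ℝ (coordVec (m + 1) j)), Finset.sum_range_two_mul_add_one, Finset.sum_range_succ',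
    Finset.sum_range_succ' (moriBlock _ _), add_left_comm]
  congr 1
  · refine Finset.sum_congr rfl fun i _ => ?_
    rw [gradVec_fderiv_odd, gradVec_fderiv_even, moriBlock, map_neg, neg_mul,
      ExteriorAlgebra.ι_mul_ι_swap (coordVec _ (2 * (i + 1) + 2))]
    module
  · simp only [mul_zero, zero_add, gradVec_fderiv_zero, gradVec_fderiv_one,
      gradVec_fderiv_two, moriBlock, map_add, map_smul, add_mul, smul_mul_assoc,
      ExteriorAlgebra.ι_sq_zero, ExteriorAlgebra.ι_mul_ι_swap (coordVec _ 2) (coordVec _ 1)]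
    module

theorem one_form_mul_prod_moriBlock (m : ℕ) (p : Fin (2 * (m + 1) + 1) → ℝ) :
    (∑ j : Fin (2 * (m + 1) + 1), moriCoeff (m + 1) j p •
        ι ℝ (Pi.single j (1 : ℝ) : Fin (2 * (m + 1) + 1) → ℝ)) *
        ((List.range (m + 1)).map (moriBlock (m + 1) p)).prod =
      ((2 * (coordAt (m + 1) p 1 ^ 2 + coordAt (m + 1) p 2 ^ 2) - 1) ^ 2 + 1) •
        (ι ℝ (coordVec (m + 1) 0) * ι ℝ (coordVec (m + 1) 1) * ι ℝ (coordVec (m + 1) 2) *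
          ((List.range m).map fun i => moriBlock (m + 1) p (i + 1)).prod) := by
  have hj (j : Fin (2 * (m + 1) + 1)) : moriCoeff (m + 1) j p •
        ι ℝ (Pi.single j (1 : ℝ) : Fin (2 * (m + 1) + 1) → ℝ) =
      moriCoeff (m + 1) j p • ι ℝ (coordVec (m + 1) j) := by rw [coordVec_coe]
  have hvan : ∀ i ∈ Finset.range m,
      (moriCoeff (m + 1) (2 * (i + 1) + 1) p • ι ℝ (coordVec (m + 1) (2 * (i + 1) + 1)) +
        moriCoeff (m + 1) (2 * (i + 1) + 2) p • ι ℝ (coordVec (m + 1) (2 * (i + 1) + 2))) *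
        ((List.range (m + 1)).map (moriBlock (m + 1) p)).prod = 0 := by
    intro i hi
    have hlt : i + 1 < m + 1 := by simpa using hi
    rw [add_mul, smul_mul_assoc, smul_mul_assoc,
      mul_prod_range_eq_zero (commute_moriBlock _ p) hlt (ι_mul_moriBlock_odd _ p i),
      mul_prod_range_eq_zero (commute_moriBlock _ p) hlt (ι_mul_moriBlock_even _ p i)]
    simp
  rw [Finset.sum_congr rfl fun j _ => hj j,
    Fin.sum_univ_eq_sum_range (fun j => moriCoeff (m + 1) j p • ι ℝ (coordVec (m + 1) j)),
    Finset.sum_range_two_mul_add_one, Finset.sum_range_succ', add_left_comm, add_mul,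
    Finset.sum_mul, Finset.sum_eq_zero hvan, zero_add, List.range_succ_eq_map, List.map_cons,
    List.prod_cons, List.map_map, ← mul_assoc, ← add_assoc, moriBlock, mul_zero, zero_add,
    zero_add, ExteriorAlgebra.one_form_mul_two_form, smul_mul_assoc]
  congr 1
  simp only [moriCoeff]
  norm_num
  ring

theorem prod_moriBlock (n m : ℕ) (p : Fin (2 * n + 1) → ℝ) :
    ι ℝ (coordVec n 0) * ι ℝ (coordVec n 1) * ι ℝ (coordVec n 2) *
        ((List.range m).map fun i => moriBlock n p (i + 1)).prod =
      (2 : ℝ) ^ m • ((List.range (2 * (m + 1) + 1)).map fun k => ι ℝ (coordVec n k)).prod := by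
  induction m with
  | zero => simp [List.range_succ, mul_assoc]
  | succ m ih =>
    rw [List.range_succ, List.map_append, List.prod_append, ← mul_assoc, ih,
      show 2 * (m + 1 + 1) + 1 = 2 * (m + 1) + 1 + 1 + 1 by ring,
      List.range_succ (n := 2 * (m + 1) + 1 + 1), List.range_succ (n := 2 * (m + 1) + 1)]
    simp only [moriBlock, List.map_append, List.map_singleton, List.prod_append,
      List.prod_singleton, smul_mul_assoc, mul_smul_comm, smul_smul, pow_succ', mul_assoc]

theorem prod_range_coordVec_ne_zero (n : ℕ) :
    ((List.range (2 * n + 1)).map fun k => ι ℝ (coordVec n k)).prod ≠ 0 := by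
  have h : (List.range (2 * n + 1)).map (fun k => ι ℝ (coordVec n k)) =
      List.ofFn fun i : Fin (2 * n + 1) => ι ℝ (Pi.single i (1 : ℝ) : Fin (2 * n + 1) → ℝ) := by
    apply List.ext_getElem
    · simp
    · intro i h1 h2
      have hi : i < 2 * n + 1 := by simpa using h1
      simpa [-List.ofFn_succ] using congrArg (ι ℝ) (coordVec_coe n ⟨i, hi⟩)
  rw [h]
  exact ExteriorAlgebra.prod_ofFn_ι_single_ne_zero _

/-- The 1-form `α = (2r² − 1)dz + r²(r² − 1)dθ + Σᵢ ρᵢ² dφᵢ` on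
`ℝ^{2n+1}` is a contact form: `α ∧ (dα)^n` is nowhere vanishing.  Here `α` and
`dα` are represented pointwise in the exterior algebra of `ℝ^{2n+1}`:
`α = Σⱼ aⱼ dxⱼ` with `aⱼ = moriCoeff n j`, and
`dα = Σᵢⱼ (∂aⱼ/∂xᵢ) dxᵢ∧dxⱼ`. -/
theorem mori_alpha_contact (n : ℕ) (hn : 1 ≤ n) (p : Fin (2 * n + 1) → ℝ) :
    (∑ j : Fin (2 * n + 1), moriCoeff n j p •
        ExteriorAlgebra.ι ℝ (Pi.single j (1 : ℝ) : Fin (2 * n + 1) → ℝ)) *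
      (∑ i : Fin (2 * n + 1), ∑ j : Fin (2 * n + 1),
        fderiv ℝ (moriCoeff n (j : ℕ)) p (Pi.single i (1 : ℝ)) •
          (ExteriorAlgebra.ι ℝ (Pi.single i (1 : ℝ) : Fin (2 * n + 1) → ℝ) *
           ExteriorAlgebra.ι ℝ (Pi.single j (1 : ℝ) : Fin (2 * n + 1) → ℝ))) ^ n
      ≠ 0 := by
  obtain ⟨m, rfl⟩ : ∃ m, n = m + 1 := ⟨n - 1, by omega⟩
  rw [sum_fderiv_moriCoeff,
    (sum_range_pow_of_sq_eq_zero (commute_moriBlock _ p) (moriBlock_mul_self _ p) (m + 1)).1,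
    mul_smul_comm, one_form_mul_prod_moriBlock, prod_moriBlock,
    ← Nat.cast_smul_eq_nsmul ℝ]
  exact smul_ne_zero (by positivity) (smul_ne_zero (by positivity)
    (smul_ne_zero (by positivity) (prod_range_coordVec_ne_zero _)))
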